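/- arXiv:2506.14287 — 4 statements merged into one kernel-verified Lean document; each statement's English description precedes it below -/
import Mathlib

section
/- Let P be a symmetric n×n real matrix, let x, x* ∈ ℝⁿ with x ≠ x*, let r = (x − x*)/‖x − x*‖, let E be an invertible n×n real matrix whose first column is r, let Γ ∈ ℝ, let D = diag(1 − Γ, 1, …, 1), let M = E D E⁻¹, and let f ∈ ℝⁿ. Then the Lyapunov derivative of the modulated vector field decomposes as 2 (x − x*)ᵀ P (M f) = 2 (x − x*)ᵀ P f − 2 Γ · (E⁻¹ f)₁ · ((x − x*)ᵀ P (x − x*)) / ‖x − x*‖, where (E⁻¹ f)₁ denotes the first coordinate of E⁻¹ f. -/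
open Matrix

/-- Lyapunov-derivative decomposition of the modulated vector field:
with `P` symmetric, `r = (x − x*)/‖x − x*‖` (Euclidean norm) the first column
of an invertible matrix `E`, `D = diag(1 − Γ, 1, …, 1)` and `M = E D E⁻¹`,
`2 (x − x*)ᵀ P (M f) = 2 (x − x*)ᵀ P f
   − 2 Γ (E⁻¹ f)₁ ((x − x*)ᵀ P (x − x*)) / ‖x − x*‖`. -/
theorem lyapunov_derivative_decomposition {n : ℕ} [NeZero n]
    (P : Matrix (Fin n) (Fin n) ℝ) (hP : P.IsSymm)
    (x xstar : Fin n → ℝ) (hx : x ≠ xstar)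
    (r : Fin n → ℝ)
    (hr : r = (Real.sqrt ((x - xstar) ⬝ᵥ (x - xstar)))⁻¹ • (x - xstar))
    (E : Matrix (Fin n) (Fin n) ℝ) (hE : IsUnit E.det)
    (hEr : ∀ i, E i 0 = r i)
    (Γ : ℝ)
    (D M : Matrix (Fin n) (Fin n) ℝ)
    (hD : D = Matrix.diagonal (fun i => if i = 0 then 1 - Γ else 1))
    (hM : M = E * D * E⁻¹)
    (f : Fin n → ℝ) :
    2 * ((x - xstar) ⬝ᵥ P.mulVec (M.mulVec f))
      = 2 * ((x - xstar) ⬝ᵥ P.mulVec f)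
        - 2 * Γ * (E⁻¹.mulVec f 0)
            * ((x - xstar) ⬝ᵥ P.mulVec (x - xstar))
            / Real.sqrt ((x - xstar) ⬝ᵥ (x - xstar)) := by
  have hDv : ∀ g : Fin n → ℝ, D *ᵥ g = g - Pi.single 0 (Γ * g 0) := by
    intro g
    ext i
    rw [hD, Matrix.mulVec_diagonal, Pi.sub_apply]
    by_cases h : i = 0
    · subst h
      simp
      ring
    · simp [h]
  have hcol : E *ᵥ Pi.single 0 (Γ * (E⁻¹ *ᵥ f) 0) = (Γ * (E⁻¹ *ᵥ f) 0) • r := by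
    ext i
    rw [Matrix.mulVec_single]
    simp [hEr, mul_comm]
  have hMf : M *ᵥ f = f - (Γ * (E⁻¹ *ᵥ f) 0) • r := by
    rw [hM, ← Matrix.mulVec_mulVec, ← Matrix.mulVec_mulVec, hDv, Matrix.mulVec_sub, hcol,
      Matrix.mulVec_mulVec, Matrix.mul_nonsing_inv E hE, Matrix.one_mulVec]
  rw [hMf, hr, Matrix.mulVec_sub, Matrix.mulVec_smul, Matrix.mulVec_smul, dotProduct_sub,
    dotProduct_smul, dotProduct_smul, smul_eq_mul, smul_eq_mul, div_eq_mul_inv]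
  ring
end

section
/- Let P be a symmetric positive definite n×n real matrix, let x, x* ∈ ℝⁿ with x ≠ x*, let r = (x − x*)/‖x − x*‖, let E be an invertible n×n real matrix whose first column is r, let Γ > 0, let D = diag(1 − Γ, 1, …, 1), let M = E D E⁻¹, and let f ∈ ℝⁿ. If 2 (x − x*)ᵀ P f < 0 (the nominal Lyapunov decrease condition) and (E⁻¹ f)₁ ≥ 0 (the nominal field has a nonnegative component along the reference direction), then 2 (x − x*)ᵀ P (M f) < 0; that is, the modulated vector field M f strictly decreases the Lyapunov function V(y) = (y − x*)ᵀ P (y − x*) at x. -/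
open Matrix

/-- Key computation in Theorem 1 of the TLI chapter: if `P` is symmetric
positive definite, `r = (x − x*)/‖x − x*‖` is the first column of an
invertible matrix `E`, `Γ > 0`, `D = diag(1 − Γ, 1, …, 1)`, `M = E D E⁻¹`,
and the nominal field `f` satisfies `2 (x − x*)ᵀ P f < 0` and
`(E⁻¹ f)₁ ≥ 0`, then the modulated field also strictly decreases the
Lyapunov function: `2 (x − x*)ᵀ P (M f) < 0`. -/
theorem modulated_lyapunov_decrease {n : ℕ} [NeZero n]
    (P : Matrix (Fin n) (Fin n) ℝ) (hP : P.PosDef)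
    (x xstar : Fin n → ℝ) (hx : x ≠ xstar)
    (r : Fin n → ℝ)
    (hr : r = (Real.sqrt ((x - xstar) ⬝ᵥ (x - xstar)))⁻¹ • (x - xstar))
    (E : Matrix (Fin n) (Fin n) ℝ) (hE : IsUnit E.det)
    (hEr : ∀ i, E i 0 = r i)
    (Γ : ℝ) (hΓ : 0 < Γ)
    (D M : Matrix (Fin n) (Fin n) ℝ)
    (hD : D = Matrix.diagonal (fun i => if i = 0 then 1 - Γ else 1))
    (hM : M = E * D * E⁻¹)
    (f : Fin n → ℝ)
    (hdec : 2 * ((x - xstar) ⬝ᵥ P.mulVec f) < 0)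
    (hcomp : 0 ≤ E⁻¹.mulVec f 0) :
    2 * ((x - xstar) ⬝ᵥ P.mulVec (M.mulVec f)) < 0 := by
  have key : M.mulVec f = f - (Γ * E⁻¹.mulVec f 0) • r := by
    have hf : E.mulVec (E⁻¹.mulVec f) = f := by
      rw [Matrix.mulVec_mulVec, Matrix.mul_nonsing_inv E hE, Matrix.one_mulVec]
    have h1 : M.mulVec f = E.mulVec (D.mulVec (E⁻¹.mulVec f)) := by
      rw [hM, Matrix.mulVec_mulVec, Matrix.mulVec_mulVec]
    set g := E⁻¹.mulVec f with hg
    have h2 : D.mulVec g = g - Pi.single 0 (Γ * g 0) := by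
      ext i
      rw [hD, Matrix.mulVec_diagonal]
      by_cases hi : i = 0
      · subst hi
        simp
        ring
      · simp [hi]
    rw [h1, h2, Matrix.mulVec_sub, hf]
    ext i
    simp [Matrix.mulVec_single, hEr, mul_comm]
  have hpos : 0 < (x - xstar) ⬝ᵥ P.mulVec (x - xstar) := by
    simpa using hP.dotProduct_mulVec_pos (sub_ne_zero.mpr hx)
  have hs : 0 ≤ (Real.sqrt ((x - xstar) ⬝ᵥ (x - xstar)))⁻¹ :=
    inv_nonneg.mpr (Real.sqrt_nonneg _)
  rw [key, hr, Matrix.mulVec_sub, Matrix.mulVec_smul, Matrix.mulVec_smul, dotProduct_sub,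
    dotProduct_smul, dotProduct_smul, smul_eq_mul, smul_eq_mul]
  have := mul_nonneg (mul_nonneg hΓ.le hcomp) (mul_nonneg hs hpos.le)
  linarith
end

section
/- Let P be a symmetric positive definite n×n real matrix, x* ∈ ℝⁿ, and V(y) = (y − x*)ᵀ P (y − x*). Let x : ℝ → ℝⁿ be a differentiable curve, and suppose that at some time t with x(t) ≠ x* the velocity satisfies x'(t) = M f, where f ∈ ℝⁿ satisfies 2 (x(t) − x*)ᵀ P f < 0, and M = E D E⁻¹ with E an invertible n×n matrix whose first column is r = (x(t) − x*)/‖x(t) − x*‖, D = diag(1 − Γ, 1, …, 1) for some Γ > 0, and (E⁻¹ f)₁ ≥ 0. Then the function t ↦ V(x(t)) has strictly negative derivative at t. -/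
open Matrix

/-- Along a differentiable curve `x(·)` whose velocity at time `t` is the
modulated field `M f` (with `M = E D E⁻¹`, `D = diag(1 − Γ, 1, …, 1)`,
`Γ > 0`, first column of `E` equal to `r = (x(t) − x*)/‖x(t) − x*‖`,
`(E⁻¹ f)₁ ≥ 0`), if `f` satisfies the nominal Lyapunov decrease
`2 (x(t) − x*)ᵀ P f < 0` for `P` symmetric positive definite, then
`t ↦ V(x(t)) = (x(t) − x*)ᵀ P (x(t) − x*)` has strictly negative derivative
at `t`. -/
theorem modulated_lyapunov_decrease_along_curve {n : ℕ} [NeZero n]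
    (P : Matrix (Fin n) (Fin n) ℝ) (hP : P.PosDef)
    (xstar : Fin n → ℝ)
    (x : ℝ → (Fin n → ℝ)) (t : ℝ)
    (hxne : x t ≠ xstar)
    (f : Fin n → ℝ)
    (hdec : 2 * ((x t - xstar) ⬝ᵥ P.mulVec f) < 0)
    (E : Matrix (Fin n) (Fin n) ℝ) (hE : IsUnit E.det)
    (r : Fin n → ℝ)
    (hr : r = (Real.sqrt ((x t - xstar) ⬝ᵥ (x t - xstar)))⁻¹ • (x t - xstar))
    (hEr : ∀ i, E i 0 = r i)
    (Γ : ℝ) (hΓ : 0 < Γ)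
    (D M : Matrix (Fin n) (Fin n) ℝ)
    (hD : D = Matrix.diagonal (fun i => if i = 0 then 1 - Γ else 1))
    (hM : M = E * D * E⁻¹)
    (hcomp : 0 ≤ E⁻¹.mulVec f 0)
    (hx : HasDerivAt x (M.mulVec f) t) :
    ∃ d : ℝ, d < 0 ∧
      HasDerivAt (fun s => (x s - xstar) ⬝ᵥ P.mulVec (x s - xstar)) d t := by
  have hMf : M *ᵥ f = f - (Γ * (E⁻¹ *ᵥ f) 0) • r := by
    have hg : E *ᵥ (E⁻¹ *ᵥ f) = f := by
      rw [Matrix.mulVec_mulVec, Matrix.mul_nonsing_inv E hE, Matrix.one_mulVec]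
    have hDg : D *ᵥ (E⁻¹ *ᵥ f)
        = E⁻¹ *ᵥ f - Pi.single 0 (Γ * (E⁻¹ *ᵥ f) 0) := by
      funext i
      rw [hD, Matrix.mulVec_diagonal]
      by_cases hi : i = 0
      · subst hi
        simp
        ring
      · simp [hi]
    rw [hM, ← Matrix.mulVec_mulVec, ← Matrix.mulVec_mulVec, hDg, Matrix.mulVec_sub, hg]
    congr 1
    funext i
    rw [Matrix.mulVec_single]
    simp [hEr, mul_comm]
  have hsymm : ∀ a b : Fin n → ℝ, a ⬝ᵥ P *ᵥ b = b ⬝ᵥ P *ᵥ a := by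
    intro a b
    have hT : Pᵀ = P := by
      have := hP.isHermitian
      rwa [Matrix.IsHermitian, Matrix.conjTranspose_eq_transpose_of_trivial] at this
    rw [Matrix.dotProduct_mulVec, dotProduct_comm, ← Matrix.mulVec_transpose, hT]
  have hu : HasDerivAt (fun s => x s - xstar) (M *ᵥ f) t := hx.sub_const xstar
  have hui := hasDerivAt_pi.1 hu
  have hPu : ∀ i, HasDerivAt (fun s => (P *ᵥ (x s - xstar)) i) ((P *ᵥ (M *ᵥ f)) i) t := by
    intro i
    simp only [Matrix.mulVec, dotProduct]
    exact HasDerivAt.fun_sum fun j _ => (hui j).const_mul (P i j)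
  refine ⟨2 * ((x t - xstar) ⬝ᵥ P *ᵥ (M *ᵥ f)), ?_, ?_⟩
  · have hpos : 0 ≤ (x t - xstar) ⬝ᵥ P *ᵥ (x t - xstar) := by
      simpa using hP.posSemidef.dotProduct_mulVec_nonneg (x t - xstar)
    have hk : 0 ≤ (Real.sqrt ((x t - xstar) ⬝ᵥ (x t - xstar)))⁻¹ := by positivity
    rw [hMf, hr, Matrix.mulVec_sub, Matrix.mulVec_smul, Matrix.mulVec_smul, dotProduct_sub,
      dotProduct_smul, dotProduct_smul, smul_eq_mul, smul_eq_mul]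
    have := mul_nonneg (mul_nonneg hΓ.le hcomp) (mul_nonneg hk hpos)
    linarith
  · have h : HasDerivAt (fun s => (x s - xstar) ⬝ᵥ P *ᵥ (x s - xstar))
        (∑ i, ((M *ᵥ f) i * (P *ᵥ (x t - xstar)) i
          + (x t - xstar) i * (P *ᵥ (M *ᵥ f)) i)) t := by
      simp only [dotProduct]
      exact HasDerivAt.fun_sum fun i _ => (hui i).mul (hPu i)
    convert h using 1
    rw [Finset.sum_add_distrib]
    change _ = (M *ᵥ f) ⬝ᵥ (P *ᵥ (x t - xstar)) + (x t - xstar) ⬝ᵥ (P *ᵥ (M *ᵥ f))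
    rw [hsymm (M *ᵥ f)]
    ring
end

section
/- Let P be a symmetric positive definite n×n real matrix, let x* ∈ ℝⁿ, let A¹, …, A^K be n×n real matrices such that each Qᵏ = (Aᵏ)ᵀ P + P Aᵏ is symmetric negative definite, and let bᵏ = −Aᵏ x*. Let γ₁, …, γ_K : ℝⁿ → ℝ be continuous functions with γₖ(x) ≥ 0 for all x and k and Σₖ γₖ(x) = 1 for all x, and define f(x) = Σₖ γₖ(x) (Aᵏ x + bᵏ). Then every differentiable solution x : [0, ∞) → ℝⁿ of the ordinary differential equation x'(t) = f(x(t)) converges to the attractor: x(t) → x* as t → ∞. -/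
open Matrix

lemma quad_compare {n : ℕ} (N : Matrix (Fin n) (Fin n) ℝ) (hN : N.PosDef)
    (g : (Fin n → ℝ) → ℝ) (hg : Continuous g)
    (hh : ∀ (r : ℝ) v, g (r • v) = r ^ 2 * g v) :
    ∃ c : ℝ, 0 < c ∧ ∀ v, c * g v ≤ v ⬝ᵥ (N *ᵥ v) := by
  have hcont : Continuous (fun v : Fin n → ℝ => v ⬝ᵥ (N *ᵥ v)) := by fun_prop
  have hS : IsCompact (Metric.sphere (0 : Fin n → ℝ) 1) := isCompact_sphere 0 1
  obtain ⟨m, hm, hmle⟩ := hS.exists_forall_le' (a := (0:ℝ)) hcont.continuousOn (by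
    intro v hv
    have hv0 : v ≠ 0 := by
      rintro rfl
      simp at hv
    simpa using hN.dotProduct_mulVec_pos hv0)
  obtain ⟨B, hB⟩ := hS.bddAbove_image hg.continuousOn
  have hB' : ∀ v ∈ Metric.sphere (0 : Fin n → ℝ) 1, g v ≤ |B| + 1 := fun v hv => by
    have := hB (Set.mem_image_of_mem g hv)
    linarith [le_abs_self B]
  have hp : 0 < |B| + 1 := by positivity
  refine ⟨m / (|B| + 1), by positivity, fun v => ?_⟩
  by_cases hv : v = 0
  · have := hh 0 0
    subst hv
    simp at this
    simp [this]
  · have hn : 0 < ‖v‖ := norm_pos_iff.mpr hv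
    have hmem : ‖v‖⁻¹ • v ∈ Metric.sphere (0 : Fin n → ℝ) 1 := by
      simp [norm_smul, hn.ne']
    have h1 := hmle _ hmem
    have h2 := hB' _ hmem
    have e : v = ‖v‖ • (‖v‖⁻¹ • v) := by
      rw [smul_smul, mul_inv_cancel₀ hn.ne', one_smul]
    set w := ‖v‖⁻¹ • v
    rw [e, hh, mulVec_smul, smul_dotProduct, dotProduct_smul, smul_eq_mul, smul_eq_mul]
    have h3 : m / (|B| + 1) * g w ≤ w ⬝ᵥ (N *ᵥ w) := by
      calc m / (|B| + 1) * g w ≤ m / (|B| + 1) * (|B| + 1) := by gcongr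
        _ = m := by field_simp
        _ ≤ _ := h1
    nlinarith [mul_le_mul_of_nonneg_left h3 (sq_nonneg ‖v‖)]

lemma hasDerivAt_quad {n : ℕ} (P : Matrix (Fin n) (Fin n) ℝ) (y : ℝ → Fin n → ℝ)
    (y' : Fin n → ℝ) (t : ℝ) (hy : HasDerivAt y y' t) :
    HasDerivAt (fun s => y s ⬝ᵥ (P *ᵥ y s)) (y' ⬝ᵥ (P *ᵥ y t) + y t ⬝ᵥ (P *ᵥ y')) t := by
  have hc := hasDerivAt_pi.mp hy
  have hPc : ∀ i, HasDerivAt (fun s => (P *ᵥ y s) i) ((P *ᵥ y') i) t := fun i => by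
    simp only [mulVec, dotProduct]
    exact HasDerivAt.fun_sum fun j _ => (hc j).const_mul _
  have := HasDerivAt.fun_sum (u := Finset.univ) fun i _ => (hc i).mul (hPc i)
  simp only [dotProduct, ← Finset.sum_add_distrib]
  exact this

/-- Global asymptotic stability of the DS motion policy: with `P ≻ 0`
symmetric, `Qᵏ = (Aᵏ)ᵀ P + P Aᵏ` symmetric negative definite,
`bᵏ = −Aᵏ x*`, and continuous mixing functions `γₖ ≥ 0` summing to `1`
pointwise, every differentiable solution of `x' = f(x)` on `[0, ∞)` with
`f(x) = Σₖ γₖ(x) (Aᵏ x + bᵏ)` converges to the attractor `x*`. -/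
theorem ds_global_asymptotic_stability {n K : ℕ}
    (P : Matrix (Fin n) (Fin n) ℝ) (hP : P.PosDef)
    (xstar : Fin n → ℝ)
    (A Q : Fin K → Matrix (Fin n) (Fin n) ℝ)
    (hQ : ∀ k, Q k = (A k)ᵀ * P + P * A k)
    (hQneg : ∀ k, (-(Q k)).PosDef)
    (b : Fin K → (Fin n → ℝ))
    (hb : ∀ k, b k = -(A k).mulVec xstar)
    (γ : Fin K → (Fin n → ℝ) → ℝ)
    (hγcont : ∀ k, Continuous (γ k))
    (hγnn : ∀ k x, 0 ≤ γ k x)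
    (hγsum : ∀ x, ∑ k, γ k x = 1)
    (f : (Fin n → ℝ) → (Fin n → ℝ))
    (hf : ∀ x, f x = ∑ k, γ k x • ((A k).mulVec x + b k))
    (x : ℝ → (Fin n → ℝ))
    (hx : ∀ t, 0 ≤ t → HasDerivAt x (f (x t)) t) :
    Filter.Tendsto x Filter.atTop (nhds xstar) := by
  obtain ⟨c, hc, hcle⟩ := quad_compare P hP (fun v => ‖v‖ ^ 2) (by fun_prop)
    (fun r v => by simp [norm_smul, mul_pow])
  have hQc : ∀ k, ∃ a : ℝ, 0 < a ∧ ∀ v, a * (v ⬝ᵥ (P *ᵥ v)) ≤ v ⬝ᵥ ((-(Q k)) *ᵥ v) := fun k =>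
    quad_compare _ (hQneg k) (fun v => v ⬝ᵥ (P *ᵥ v)) (by fun_prop) (fun r v => by
      simp only [mulVec_smul, smul_dotProduct, dotProduct_smul, smul_eq_mul]; ring)
  choose a ha hale using hQc
  have hV0 : ∀ v, 0 ≤ v ⬝ᵥ (P *ᵥ v) := fun v => le_trans (by positivity) (hcle v)
  have hne : Nonempty (Fin K) := by
    by_contra h
    rw [not_nonempty_iff] at h
    simpa using hγsum 0
  obtain ⟨k0, hk0⟩ := Finite.exists_min a
  set α := a k0
  have hα : 0 < α := ha k0
  have hPs : Pᵀ = P := by simpa using hP.isHermitian.eq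
  -- the pointwise decay estimate
  have hdec : ∀ z, f z ⬝ᵥ (P *ᵥ (z - xstar)) + (z - xstar) ⬝ᵥ (P *ᵥ f z)
      ≤ -α * ((z - xstar) ⬝ᵥ (P *ᵥ (z - xstar))) := by
    intro z
    have hfz : f z = ∑ k, γ k z • ((A k) *ᵥ (z - xstar)) := by
      rw [hf]
      refine Finset.sum_congr rfl fun k _ => ?_
      rw [hb, mulVec_sub, sub_eq_add_neg]
    generalize z - xstar = y at *
    have hk : ∀ k, (A k *ᵥ y) ⬝ᵥ (P *ᵥ y) + y ⬝ᵥ (P *ᵥ (A k *ᵥ y)) = y ⬝ᵥ (Q k *ᵥ y) := by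
      intro k
      rw [hQ, add_mulVec, dotProduct_add, ← mulVec_mulVec, ← mulVec_mulVec,
        dotProduct_mulVec y (A k)ᵀ, vecMul_transpose]
    rw [hfz, mulVec_sum, sum_dotProduct, dotProduct_sum, ← Finset.sum_add_distrib]
    calc _ = ∑ k, γ k z * (y ⬝ᵥ (Q k *ᵥ y)) := by
          refine Finset.sum_congr rfl fun k _ => ?_
          rw [← hk, mulVec_smul, smul_dotProduct, dotProduct_smul, smul_eq_mul, smul_eq_mul]
          ring
      _ ≤ ∑ k, γ k z * (-α * (y ⬝ᵥ (P *ᵥ y))) := by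
          refine Finset.sum_le_sum fun k _ => mul_le_mul_of_nonneg_left ?_ (hγnn k z)
          have h1 := hale k y
          rw [neg_mulVec, dotProduct_neg] at h1
          have h2 := mul_le_mul_of_nonneg_right (hk0 k) (hV0 y)
          linarith
      _ = _ := by rw [← Finset.sum_mul, hγsum, one_mul]
  set V : ℝ → ℝ := fun t => (x t - xstar) ⬝ᵥ (P *ᵥ (x t - xstar)) with hVdef
  have hVd : ∀ t, 0 ≤ t → HasDerivAt V
      (f (x t) ⬝ᵥ (P *ᵥ (x t - xstar)) + (x t - xstar) ⬝ᵥ (P *ᵥ f (x t))) t := fun t ht =>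
    hasDerivAt_quad P (fun s => x s - xstar) _ t ((hx t ht).sub_const xstar)
  have hE : ∀ t, HasDerivAt (fun s : ℝ => Real.exp (α * s)) (Real.exp (α * t) * α) t := fun t => by
    simpa using ((hasDerivAt_id t).const_mul α).exp
  have hWd := fun t ht => (hVd t ht).mul (hE t)
  have hanti : AntitoneOn (V * fun s : ℝ => Real.exp (α * s)) (Set.Ici 0) := by
    refine antitoneOn_of_deriv_nonpos (convex_Ici 0)
      (fun t ht => (hWd t ht).continuousAt.continuousWithinAt)
      (fun t ht => (hWd t (interior_subset ht)).differentiableAt.differentiableWithinAt)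
      (fun t ht => ?_)
    rw [(hWd t (interior_subset ht)).deriv]
    have := mul_le_mul_of_nonneg_right (hdec (x t)) (Real.exp_pos (α * t)).le
    simp only [hVdef]
    linarith
  have hbound : ∀ t, 0 ≤ t → c * ‖x t - xstar‖ ^ 2 ≤ V 0 * Real.exp (-(α * t)) := by
    intro t ht
    have h1 := hanti (Set.mem_Ici.mpr le_rfl) (Set.mem_Ici.mpr ht) ht
    simp only [Pi.mul_apply, mul_zero, Real.exp_zero, mul_one] at h1
    refine (hcle _).trans ?_
    rw [Real.exp_neg, ← div_eq_mul_inv, le_div_iff₀ (Real.exp_pos _)]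
    exact h1
  have hlim : Filter.Tendsto (fun t : ℝ => V 0 * Real.exp (-(α * t)) / c) Filter.atTop (nhds 0) := by
    have h1 : Filter.Tendsto (fun t : ℝ => α * t) Filter.atTop Filter.atTop :=
      Filter.tendsto_id.const_mul_atTop hα
    simpa using ((Real.tendsto_exp_neg_atTop_nhds_zero.comp h1).const_mul (V 0)).div_const c
  have hsq : Filter.Tendsto (fun t => ‖x t - xstar‖ ^ 2) Filter.atTop (nhds 0) := by
    refine squeeze_zero' (Filter.Eventually.of_forall fun t => by positivity) ?_ hlim
    filter_upwards [Filter.eventually_ge_atTop 0] with t ht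
    rw [le_div_iff₀ hc, mul_comm]
    exact hbound t ht
  rw [tendsto_iff_norm_sub_tendsto_zero]
  have := hsq.sqrt
  simpa [Real.sqrt_sq] using this
end
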